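/- The Gramian map 𝒩₂ : L^∞((t₀,T);ℝ^k) → symmetric positive semidefinite d×d matrices is continuous, and it is globally Lipschitz on the ball 𝓑 := {u ∈ L^∞ : ‖u‖_∞ ≤ ζ₂}: assuming L_B ζ₂ ∉ {Λ₁, 2Λ₁}, for all u, v ∈ 𝓑 one has ‖𝒩₂(u) − 𝒩₂(v)‖ ≤ L_{𝒩₂} ‖u − v‖_∞ with the explicit constant L_{𝒩₂} := (L_B ‖B‖_∞² e^{Λ₁Δt₀}/Λ₁) · [ (e^{Λ₁Δt₀} − e^{L_Bζ₂Δt₀})/(Λ₁ − L_Bζ₂) − (e^{L_Bζ₂Δt₀} − e^{−Λ₁Δt₀})/(L_Bζ₂ + Λ₁) ] + (2‖B‖_∞³ Λ₂ e^{Λ₁Δt₀}/(Λ₁(Λ₁ + L_Bζ₂))) · [ (e^{2Λ₁Δt₀} − e^{L_Bζ₂Δt₀})/(2Λ₁ − L_Bζ₂) + (e^{Λ₁Δt₀} − e^{L_Bζ₂Δt₀})/(Λ₁ − L_Bζ₂) + (e^{Λ₁Δt₀} − e^{−Λ₁Δt₀})/(2Λ₁) − (e^{2Λ₁Δt₀}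 − e^{−Λ₁Δt₀})/(3Λ₁) ]. -/

import Mathlib

open Set intervalIntegral MeasureTheory Filter
open scoped RealInnerProductSpace

/-- `K_u(t) := DΦ_{t,τ}(x_u(t)) B(t, x_u(t))`. -/
noncomputable def Kker {d k : ℕ} (τ : ℝ)
    (DΦ : ℝ → ℝ → EuclideanSpace ℝ (Fin d) →
      (EuclideanSpace ℝ (Fin d) →L[ℝ] EuclideanSpace ℝ (Fin d)))
    (Bm : ℝ → EuclideanSpace ℝ (Fin d) →
      (EuclideanSpace ℝ (Fin k) →L[ℝ] EuclideanSpace ℝ (Fin d)))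
    (x : ℝ → EuclideanSpace ℝ (Fin d)) (t : ℝ) :
    EuclideanSpace ℝ (Fin k) →L[ℝ] EuclideanSpace ℝ (Fin d) :=
  (DΦ t τ (x t)).comp (Bm t (x t))

/-- The trajectory-dependent controllability Gramian
`𝒩 = ∫_{t₀}^T DΦ_{t,τ}(x_u(t)) B B^⊤ DΦ_{t,τ}(x_u(t))^⊤ dt`. -/
noncomputable def gram {d k : ℕ} (t₀ T τ : ℝ)
    (DΦ : ℝ → ℝ → EuclideanSpace ℝ (Fin d) →
      (EuclideanSpace ℝ (Fin d) →L[ℝ] EuclideanSpace ℝ (Fin d)))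
    (Bm : ℝ → EuclideanSpace ℝ (Fin d) →
      (EuclideanSpace ℝ (Fin k) →L[ℝ] EuclideanSpace ℝ (Fin d)))
    (x : ℝ → EuclideanSpace ℝ (Fin d)) :
    EuclideanSpace ℝ (Fin d) →L[ℝ] EuclideanSpace ℝ (Fin d) :=
  ∫ t in t₀..T,
    (Kker τ DΦ Bm x t).comp (ContinuousLinearMap.adjoint (Kker τ DΦ Bm x t))

/-- The map `L_{u,τ} v = ∫_{t₀}^T DΦ_{t,τ}(x_u(t)) B(t,x_u(t)) v(t) dt`. -/
noncomputable def Lmap {d k : ℕ} (t₀ T τ : ℝ)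
    (DΦ : ℝ → ℝ → EuclideanSpace ℝ (Fin d) →
      (EuclideanSpace ℝ (Fin d) →L[ℝ] EuclideanSpace ℝ (Fin d)))
    (Bm : ℝ → EuclideanSpace ℝ (Fin d) →
      (EuclideanSpace ℝ (Fin k) →L[ℝ] EuclideanSpace ℝ (Fin d)))
    (x : ℝ → EuclideanSpace ℝ (Fin d))
    (w : ℝ → EuclideanSpace ℝ (Fin k)) : EuclideanSpace ℝ (Fin d) :=
  ∫ t in t₀..T, (Kker τ DΦ Bm x t) (w t)

/-- The smallest eigenvalue of a symmetric operator, as the infimum of its Rayleigh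
quotient over the unit sphere. -/
noncomputable def lambdaMin {d : ℕ}
    (M : EuclideanSpace ℝ (Fin d) →L[ℝ] EuclideanSpace ℝ (Fin d)) : ℝ :=
  ⨅ x : Metric.sphere (0 : EuclideanSpace ℝ (Fin d)) 1,
    ⟪(x : EuclideanSpace ℝ (Fin d)), M x⟫

/-- The supremum of a real-valued function over `[t₀, T]` (the `L^∞((t₀,T))`-norm for
continuous representatives). -/
noncomputable def supIcc (t₀ T : ℝ) (f : ℝ → ℝ) : ℝ := sSup (f '' Icc t₀ T)

/-- A control is admissible when it is measurable and bounded on `[t₀, T]`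
(i.e. belongs to `L^∞((t₀,T);ℝ^k)`). -/
def Adm {k : ℕ} (t₀ T : ℝ) (u : ℝ → EuclideanSpace ℝ (Fin k)) : Prop :=
  Measurable u ∧ ∃ M : ℝ, ∀ t ∈ Icc t₀ T, ‖u t‖ ≤ M

/-- The feasible coercivity class `ℱ(C) = {u ∈ L^∞ : λ_min(𝒩(u)) ≥ C⁻¹}`. -/
def Fcl {d k : ℕ} (t₀ T τ C : ℝ)
    (DΦ : ℝ → ℝ → EuclideanSpace ℝ (Fin d) →
      (EuclideanSpace ℝ (Fin d) →L[ℝ] EuclideanSpace ℝ (Fin d)))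
    (Bm : ℝ → EuclideanSpace ℝ (Fin d) →
      (EuclideanSpace ℝ (Fin k) →L[ℝ] EuclideanSpace ℝ (Fin d)))
    (xSol : (ℝ → EuclideanSpace ℝ (Fin k)) → ℝ → EuclideanSpace ℝ (Fin d)) :
    Set (ℝ → EuclideanSpace ℝ (Fin k)) :=
  {u | Adm t₀ T u ∧ C⁻¹ ≤ lambdaMin (gram t₀ T τ DΦ Bm (xSol u))}

/-- The feasibility ball `ℱ(y) = {u ∈ ℱ(C) : ‖u‖_∞ ≤ ζ}` with
`ζ = C ‖B‖_∞ e^{Λ₁(T−t₀)} |y|`. -/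
def Fball {d k : ℕ} (t₀ T τ C Λ₁ Bsup : ℝ)
    (DΦ : ℝ → ℝ → EuclideanSpace ℝ (Fin d) →
      (EuclideanSpace ℝ (Fin d) →L[ℝ] EuclideanSpace ℝ (Fin d)))
    (Bm : ℝ → EuclideanSpace ℝ (Fin d) →
      (EuclideanSpace ℝ (Fin k) →L[ℝ] EuclideanSpace ℝ (Fin d)))
    (xSol : (ℝ → EuclideanSpace ℝ (Fin k)) → ℝ → EuclideanSpace ℝ (Fin d))
    (y : EuclideanSpace ℝ (Fin d)) :
    Set (ℝ → EuclideanSpace ℝ (Fin k)) :=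
  {u | u ∈ Fcl t₀ T τ C DΦ Bm xSol ∧
    ∀ t ∈ Icc t₀ T, ‖u t‖ ≤ C * Bsup * Real.exp (Λ₁ * (T - t₀)) * ‖y‖}

/-- The synthesis map `𝒮(u)(t) = B(t,x_u(t))^⊤ DΦ_{t,τ}(x_u(t))^⊤ 𝒩(u)⁻¹ y`. -/
noncomputable def Smap {d k : ℕ} (t₀ T τ : ℝ)
    (DΦ : ℝ → ℝ → EuclideanSpace ℝ (Fin d) →
      (EuclideanSpace ℝ (Fin d) →L[ℝ] EuclideanSpace ℝ (Fin d)))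
    (Bm : ℝ → EuclideanSpace ℝ (Fin d) →
      (EuclideanSpace ℝ (Fin k) →L[ℝ] EuclideanSpace ℝ (Fin d)))
    (xSol : (ℝ → EuclideanSpace ℝ (Fin k)) → ℝ → EuclideanSpace ℝ (Fin d))
    (y : EuclideanSpace ℝ (Fin d))
    (u : ℝ → EuclideanSpace ℝ (Fin k)) : ℝ → EuclideanSpace ℝ (Fin k) :=
  fun t => ContinuousLinearMap.adjoint (Kker τ DΦ Bm (xSol u) t)
    ((gram t₀ T τ DΦ Bm (xSol u)).inverse y)


theorem aux_gron {F : Type*} [NormedAddCommGroup F] [NormedSpace ℝ F] {s T a : ℝ}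
    {f f' : ℝ → F} {h P P' : ℝ → ℝ}
    (hf : ∀ t ∈ Icc s T, HasDerivAt f (f' t) t)
    (hf' : ∀ t ∈ Icc s T, ‖f' t‖ ≤ a * ‖f t‖ + h t)
    (hP : ∀ t, HasDerivAt P (P' t) t)
    (hP' : ∀ t ∈ Icc s T, a * P t + h t ≤ P' t)
    (h0 : ‖f s‖ ≤ P s) : ∀ t ∈ Icc s T, ‖f t‖ ≤ P t := by
  intro t ht
  have key : ∀ ε > (0:ℝ), ‖f t‖ ≤ P t + ε * Real.exp ((a+1) * (t - s)) := by
    intro ε hε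
    have hB : ∀ x, HasDerivAt (fun t => P t + ε * Real.exp ((a+1) * (t - s)))
        (P' x + ε * (Real.exp ((a+1) * (x - s)) * ((a+1) * 1))) x := by
      intro x
      exact (hP x).add ((((hasDerivAt_id x).sub_const s).const_mul (a+1)).exp.const_mul ε)
    refine image_norm_le_of_norm_deriv_right_lt_deriv_boundary (f' := f') 
      (fun x hx => (hf x hx).continuousAt.continuousWithinAt)
      (fun x hx => (hf x (Ico_subset_Icc_self hx)).hasDerivWithinAt) ?_ hB ?_ ht
    · have := mul_pos hε (Real.exp_pos ((a+1) * (s - s)))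
      show ‖f s‖ ≤ P s + ε * Real.exp ((a+1) * (s - s))
      linarith
    · intro x hx he
      have h1 := hf' x (Ico_subset_Icc_self hx)
      have h2 := hP' x (Ico_subset_Icc_self hx)
      rw [he] at h1
      have := mul_pos hε (Real.exp_pos ((a+1) * (x - s)))
      nlinarith
  have hE := Real.exp_pos ((a+1) * (t - s))
  refine le_of_forall_pos_le_add fun ε hε => ?_
  have := key (ε / Real.exp ((a+1) * (t - s))) (by positivity)
  rwa [div_mul_cancel₀ _ hE.ne'] at this

/-- integral Gronwall -/
theorem aux_intgron {t₀ T c e : ℝ} (ht : t₀ ≤ T) (hc : 0 < c) (he : 0 ≤ e) {z : ℝ → ℝ}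
    (hz0 : ∀ t, 0 ≤ z t) (hz : ContinuousOn z (Icc t₀ T))
    (hle : ∀ t ∈ Icc t₀ T, z t ≤ ∫ s in t₀..t, (c * z s + e)) :
    ∀ t ∈ Icc t₀ T, z t ≤ e * ((Real.exp (c * (t - t₀)) - 1) / c) := by
  set y : ℝ → ℝ := fun s => z (projIcc t₀ T ht s) with hy
  have hyc : Continuous y := by
    have := (continuousOn_iff_continuous_domRestrict.1 hz).comp (continuous_projIcc (h := ht))
    exact this
  have hyz : ∀ t ∈ Icc t₀ T, y t = z t := fun t h => by simp [hy, projIcc_of_mem ht h]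
  set w : ℝ → ℝ := fun t => ∫ s in t₀..t, (c * y s + e) with hw
  have hItg : Continuous (fun s => c * y s + e) := by fun_prop
  have hwd : ∀ t, HasDerivAt w (c * y t + e) t := fun t => 
    intervalIntegral.integral_hasDerivAt_right (hItg.intervalIntegrable _ _)
      (hItg.stronglyMeasurableAtFilter _ _) hItg.continuousAt
  have hzw : ∀ t ∈ Icc t₀ T, z t ≤ w t := by
    intro t h
    refine (hle t h).trans (le_of_eq ?_)
    refine intervalIntegral.integral_congr fun s hs => ?_
    rw [uIcc_of_le h.1] at hs
    rw [hyz s ⟨hs.1, hs.2.trans h.2⟩]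
  have hP : ∀ t, HasDerivAt (fun t => e * ((Real.exp (c * (t - t₀)) - 1) / c))
      (e * ((Real.exp (c * (t - t₀)) * (c * 1)) / c)) t := fun t =>
    ((((((hasDerivAt_id t).sub_const t₀).const_mul c).exp).sub_const 1).div_const c).const_mul e
  intro t h
  have := aux_gron (a := c) (h := fun _ => e) (f := w) (f' := fun t => c * y t + e)
    (s := t₀) (T := T) (fun t _ => hwd t) ?_ hP ?_ ?_ t h
  · exact (hzw t h).trans ((le_abs_self _).trans this)
  · intro t h
    have h1 := hzw t h
    have h2 := hz0 t
    rw [hyz t h, Real.norm_of_nonneg (by positivity), Real.norm_of_nonneg (h2.trans h1)]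
    gcongr
  · intro t h
    field_simp
    simp
  · simp [hw]

theorem aux_exp_int {t₀ T m n : ℝ} (h : n ≠ m) :
    ∫ t in t₀..T, Real.exp (m * (T - t) + n * (t - t₀))
      = (Real.exp (n * (T - t₀)) - Real.exp (m * (T - t₀))) / (n - m) := by
  have hnm : n - m ≠ 0 := sub_ne_zero.2 h
  have hd : ∀ t, HasDerivAt (fun t => Real.exp (m * (T - t) + n * (t - t₀)) / (n - m))
      (Real.exp (m * (T - t) + n * (t - t₀))) t := by
    intro t
    have h1 := ((((hasDerivAt_id t).const_sub T).const_mul m).add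
      (((hasDerivAt_id t).sub_const t₀).const_mul n)).exp.div_const (n - m)
    have h2 : Real.exp (m * (T - t) + n * (t - t₀)) * (m * -1 + n * 1) / (n - m)
        = Real.exp (m * (T - t) + n * (t - t₀)) := by
      rw [div_eq_iff hnm]; ring
    rw [← h2]
    exact h1
  rw [intervalIntegral.integral_eq_sub_of_hasDerivAt (fun t _ => hd t)
    (Continuous.intervalIntegrable (by fun_prop) _ _)]
  simp [sub_div]

/-- the constant as an integral -/
noncomputable def auxC (t₀ T a Λ₂ L β b : ℝ) : ℝ :=
  ∫ t in t₀..T, 2 * (Real.exp (a * (T - t)) * β) *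
    ((Real.exp (a * (T - t)) * L + Λ₂ * Real.exp (a * (T - t)) * ((Real.exp (a * (T - t)) - 1) / a) * β)
      * (β * ((Real.exp ((a + b) * (t - t₀)) - 1) / (a + b))))

theorem auxC_le {t₀ T a Λ₂ L β b : ℝ} (ht : t₀ < T) (ha : 0 < a) (hΛ₂ : 0 < Λ₂) (hβ : 0 ≤ β)
    (hb : 0 ≤ b) (h1 : b ≠ a) (h2 : b ≠ 2 * a) :
    auxC t₀ T a Λ₂ L β b ≤ (L * β ^ 2 * Real.exp (a * (T - t₀)) / a
            * ((Real.exp (a * (T - t₀)) - Real.exp (b * (T - t₀)))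
                  / (a - b)
               - (Real.exp (b * (T - t₀)) - Real.exp (-(a * (T - t₀))))
                  / (b + a))
          + 2 * β ^ 3 * Λ₂ * Real.exp (a * (T - t₀)) / (a * (a + b))
            * ((Real.exp (2 * a * (T - t₀)) - Real.exp (b * (T - t₀)))
                  / (2 * a - b)
               + (Real.exp (a * (T - t₀)) - Real.exp (b * (T - t₀)))
                  / (a - b)
               + (Real.exp (a * (T - t₀)) - Real.exp (-(a * (T - t₀)))) / (2 * a)
               - (Real.exp (2 * a * (T - t₀)) - Real.exp (-(a * (T - t₀)))) / (3 * a))) := by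
  have hab : a + b ≠ 0 := by positivity
  have e1 : auxC t₀ T a Λ₂ L β b = ∫ t in t₀..T,
      ((2 * β^2 * L / (a+b)) * (Real.exp ((2*a) * (T - t) + (a+b) * (t - t₀))
          - Real.exp ((2*a) * (T - t) + 0 * (t - t₀)))
       + (2 * β^3 * Λ₂ / (a * (a+b))) * (Real.exp ((3*a) * (T - t) + (a+b) * (t - t₀))
          - Real.exp ((2*a) * (T - t) + (a+b) * (t - t₀))
          - Real.exp ((3*a) * (T - t) + 0 * (t - t₀))
          + Real.exp ((2*a) * (T - t) + 0 * (t - t₀)))) := by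
    unfold auxC
    refine intervalIntegral.integral_congr fun t _ => ?_
    have x2 : Real.exp ((2*a) * (T - t)) = Real.exp (a * (T - t)) ^ 2 := by
      rw [← Real.exp_nat_mul]; congr 1; push_cast; ring
    have x3 : Real.exp ((3*a) * (T - t)) = Real.exp (a * (T - t)) ^ 3 := by
      rw [← Real.exp_nat_mul]; congr 1; push_cast; ring
    simp only [Real.exp_add, x2, x3, zero_mul, Real.exp_zero]
    field_simp
    ring
  have ii : ∀ m n : ℝ, IntervalIntegrable (fun t => Real.exp (m * (T - t) + n * (t - t₀))) volume t₀ T :=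
    fun m n => Continuous.intervalIntegrable (by fun_prop) _ _
  rw [e1, intervalIntegral.integral_add, intervalIntegral.integral_const_mul,
    intervalIntegral.integral_const_mul, intervalIntegral.integral_sub (ii _ _) (ii _ _),
    intervalIntegral.integral_add (((ii _ _).sub (ii _ _)).sub (ii _ _)) (ii _ _), 
    intervalIntegral.integral_sub ((ii _ _).sub (ii _ _)) (ii _ _),
    intervalIntegral.integral_sub (ii _ _) (ii _ _),
    aux_exp_int, aux_exp_int, aux_exp_int, aux_exp_int]
  rotate_left
  · intro h; linarith
  · intro h; apply h2; linarith
  · intro h; linarith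
  · intro h; apply h1; linarith
  · exact ((ii _ _).sub (ii _ _)).const_mul _
  · exact ((((ii _ _).sub (ii _ _)).sub (ii _ _)).add (ii _ _)).const_mul _
  set D := T - t₀ with hD
  have hDp : 0 < D := sub_pos.2 ht
  have x2 : Real.exp ((2*a) * D) = Real.exp (a * D) ^ 2 := by
    rw [← Real.exp_nat_mul]; congr 1; push_cast; ring
  have x3 : Real.exp ((3*a) * D) = Real.exp (a * D) ^ 3 := by
    rw [← Real.exp_nat_mul]; congr 1; push_cast; ring
  have hpos : 0 ≤ (Real.exp (a * D) - Real.exp (b * D)) / (a - b) := by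
    rcases lt_or_gt_of_ne h1 with h | h
    · apply div_nonneg
      · have : b * D ≤ a * D := by gcongr
        have := Real.exp_le_exp.2 this
        linarith
      · linarith
    · apply div_nonneg_of_nonpos
      · have : a * D ≤ b * D := by gcongr
        have := Real.exp_le_exp.2 this
        linarith
      · linarith
  have hpos2 : 0 ≤ 2 * (2 * β ^ 3 * Λ₂ * Real.exp (a * D) / (a * (a + b))) * ((Real.exp (a * D) - Real.exp (b * D)) / (a - b)) := by
    positivity
  rw [add_mul a b D, Real.exp_add, x2, x3, Real.exp_neg, zero_mul, Real.exp_zero]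
  have hX := Real.exp_pos (a * D)
  set X := Real.exp (a * D)
  set Y := Real.exp (b * D)
  rw [← sub_nonneg]
  refine hpos2.trans (le_of_eq ?_)
  have n1 : a - b ≠ 0 := sub_ne_zero.2 (Ne.symm h1)
  have n2 : 2 * a - b ≠ 0 := sub_ne_zero.2 (Ne.symm h2)
  have r1 : a + b - 2 * a = -(a - b) := by ring
  have r2 : a + b - 3 * a = -(2 * a - b) := by ring
  have r3 : b + a = a + b := by ring
  rw [r1, r2, r3]
  have q1 : L * β ^ 2 * X / a * ((X - Y) / (a - b) - (Y - X⁻¹) / (a + b)) = 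
     2 * β ^ 2 * L / (a + b) * ((X * Y - X^2) / (-(a - b)) - (1 - X^2) / (0 - 2 * a)) := by
    rw [zero_sub]
    field_simp
    ring
  rw [q1, zero_sub, zero_sub]
  field_simp
  ring

theorem aux_expP (C a s : ℝ) (t : ℝ) :
    HasDerivAt (fun t => C * Real.exp (a * (t - s))) (C * (Real.exp (a * (t - s)) * (a * 1))) t :=
  (((hasDerivAt_id t).sub_const s).const_mul a).exp.const_mul C

section flow
variable {E : Type*} [NormedAddCommGroup E] [NormedSpace ℝ E]

theorem aux_lip {F : Type*} [NormedAddCommGroup F] [NormedSpace ℝ F] {f : E → F} {C : ℝ}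
    (hf : Differentiable ℝ f) (h : ∀ w, ‖fderiv ℝ f w‖ ≤ C) (x y : E) :
    ‖f x - f y‖ ≤ C * ‖x - y‖ :=
  Convex.norm_image_sub_le_of_norm_fderiv_le (fun z _ => hf z) (fun z _ => h z) convex_univ
    (mem_univ _) (mem_univ _)

variable {t₀ T Λ₁ Λ₂ : ℝ} {N : ℝ → E → E} {Φ : ℝ → ℝ → E → E} {DΦ : ℝ → ℝ → E → (E →L[ℝ] E)}

theorem aux_Φlip 
    (hNC2 : ∀ t, ContDiff ℝ 2 (N t))
    (hDN : ∀ t w, ‖fderiv ℝ (N t) w‖ ≤ Λ₁)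
    (hflow_init : ∀ s x, Φ s s x = x)
    (hflow_ode : ∀ s x, ∀ t ∈ Icc t₀ T, HasDerivAt (fun τ' => Φ s τ' x) (N t (Φ s t x)) t)
    {s t : ℝ} (hs : t₀ ≤ s) (hst : s ≤ t) (ht : t ≤ T) (x y : E) :
    ‖Φ s t x - Φ s t y‖ ≤ ‖x - y‖ * Real.exp (Λ₁ * (t - s)) := by
  refine aux_gron (a := Λ₁) (h := fun _ => 0) (f := fun t => Φ s t x - Φ s t y) (s := s) (T := T)
    (f' := fun t => N t (Φ s t x) - N t (Φ s t y)) ?_ ?_ (aux_expP _ _ _) ?_ ?_ t ⟨hst, ht⟩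
  · intro t h
    exact (hflow_ode s x t ⟨hs.trans h.1, h.2⟩).sub (hflow_ode s y t ⟨hs.trans h.1, h.2⟩)
  · intro t h
    rw [add_zero]
    exact aux_lip ((hNC2 t).differentiable (by norm_num)) (hDN t) _ _
  · intro t h
    linarith
  · simp [hflow_init]

theorem aux_DΦnorm 
    (hDN : ∀ t w, ‖fderiv ℝ (N t) w‖ ≤ Λ₁)
    (hDΦ_init : ∀ s x, DΦ s s x = ContinuousLinearMap.id ℝ E)
    (hDΦ_ode : ∀ s x, ∀ t ∈ Icc t₀ T,
      HasDerivAt (fun τ' => DΦ s τ' x) ((fderiv ℝ (N t) (Φ s t x)).comp (DΦ s t x)) t)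
    {s t : ℝ} (hs : t₀ ≤ s) (hst : s ≤ t) (ht : t ≤ T) (x : E) :
    ‖DΦ s t x‖ ≤ Real.exp (Λ₁ * (t - s)) := by
  rw [← one_mul (Real.exp _)]
  refine aux_gron (a := Λ₁) (h := fun _ => 0) (f := fun t => DΦ s t x) (s := s) (T := T)
    (f' := fun t => (fderiv ℝ (N t) (Φ s t x)).comp (DΦ s t x)) ?_ ?_ (aux_expP _ _ _) ?_ ?_ t ⟨hst, ht⟩
  · intro t h
    exact (hDΦ_ode s x t ⟨hs.trans h.1, h.2⟩)
  · intro t h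
    rw [add_zero]
    refine (ContinuousLinearMap.opNorm_comp_le _ _).trans ?_
    gcongr
    exact hDN _ _
  · intro t h
    linarith
  · simp only [hDΦ_init, sub_self, mul_zero, Real.exp_zero, mul_one]
    exact ContinuousLinearMap.norm_id_le

theorem aux_DΦlip (hΛ₁ : 0 < Λ₁) (hΛ₂ : 0 < Λ₂)
    (hNC2 : ∀ t, ContDiff ℝ 2 (N t))
    (hDN : ∀ t w, ‖fderiv ℝ (N t) w‖ ≤ Λ₁)
    (hD2N : ∀ t w, ‖fderiv ℝ (fderiv ℝ (N t)) w‖ ≤ Λ₂)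
    (hflow_init : ∀ s x, Φ s s x = x)
    (hflow_ode : ∀ s x, ∀ t ∈ Icc t₀ T, HasDerivAt (fun τ' => Φ s τ' x) (N t (Φ s t x)) t)
    (hDΦ_init : ∀ s x, DΦ s s x = ContinuousLinearMap.id ℝ E)
    (hDΦ_ode : ∀ s x, ∀ t ∈ Icc t₀ T,
      HasDerivAt (fun τ' => DΦ s τ' x) ((fderiv ℝ (N t) (Φ s t x)).comp (DΦ s t x)) t)
    {s t : ℝ} (hs : t₀ ≤ s) (hst : s ≤ t) (ht : t ≤ T) (x y : E) :
    ‖DΦ s t x - DΦ s t y‖ ≤ 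
      (Λ₂ * Real.exp (Λ₁ * (t - s)) * ((Real.exp (Λ₁ * (t - s)) - 1) / Λ₁)) * ‖x - y‖ := by
  have hP : ∀ t, HasDerivAt (fun t => 
      (Λ₂ * Real.exp (Λ₁ * (t - s)) * ((Real.exp (Λ₁ * (t - s)) - 1) / Λ₁)) * ‖x - y‖)
      (((Λ₂ * (Real.exp (Λ₁ * (t - s)) * (Λ₁ * 1))) * ((Real.exp (Λ₁ * (t - s)) - 1) / Λ₁)
       + Λ₂ * Real.exp (Λ₁ * (t - s)) * ((Real.exp (Λ₁ * (t - s)) * (Λ₁ * 1)) / Λ₁)) * ‖x - y‖) t := by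
    intro t
    have h1 := (((hasDerivAt_id t).sub_const s).const_mul Λ₁).exp
    exact ((h1.const_mul Λ₂).mul ((h1.sub_const 1).div_const Λ₁)).mul_const _
  refine aux_gron (a := Λ₁) (f := fun t => DΦ s t x - DΦ s t y) (s := s) (T := T)
    (h := fun t => Λ₂ * (‖x - y‖ * Real.exp (Λ₁ * (t - s))) * Real.exp (Λ₁ * (t - s)))
    (f' := fun t => (fderiv ℝ (N t) (Φ s t x)).comp (DΦ s t x)
      - (fderiv ℝ (N t) (Φ s t y)).comp (DΦ s t y)) ?_ ?_ hP ?_ ?_ t ⟨hst, ht⟩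
  · intro t h
    exact (hDΦ_ode s x t ⟨hs.trans h.1, h.2⟩).sub (hDΦ_ode s y t ⟨hs.trans h.1, h.2⟩)
  · intro t h
    have e : (fderiv ℝ (N t) (Φ s t x)).comp (DΦ s t x) - (fderiv ℝ (N t) (Φ s t y)).comp (DΦ s t y)
       = (fderiv ℝ (N t) (Φ s t x)).comp (DΦ s t x - DΦ s t y)
         + (fderiv ℝ (N t) (Φ s t x) - fderiv ℝ (N t) (Φ s t y)).comp (DΦ s t y) := by
      ext v; simp
    simp only [e]
    refine (norm_add_le _ _).trans (add_le_add ?_ ?_)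
    · refine (ContinuousLinearMap.opNorm_comp_le _ _).trans ?_
      gcongr
      exact hDN _ _
    · refine (ContinuousLinearMap.opNorm_comp_le _ _).trans ?_
      have h1 := aux_lip (((hNC2 t).fderiv_right (m := 1) (by norm_num)).differentiable (by norm_num))
        (hD2N t) (Φ s t x) (Φ s t y)
      have h2 := aux_Φlip hNC2 hDN hflow_init hflow_ode hs h.1 h.2 x y
      have h3 := aux_DΦnorm hDN hDΦ_init hDΦ_ode hs h.1 h.2 y
      have h4 := h1.trans (mul_le_mul_of_nonneg_left h2 hΛ₂.le)
      gcongr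
  · intro t h
    apply le_of_eq
    field_simp
  · simp [hDΦ_init]

theorem aux_cont (hΛ₁ : 0 < Λ₁) (hΛ₂ : 0 < Λ₂)
    (hNC2 : ∀ t, ContDiff ℝ 2 (N t))
    (hDN : ∀ t w, ‖fderiv ℝ (N t) w‖ ≤ Λ₁)
    (hD2N : ∀ t w, ‖fderiv ℝ (fderiv ℝ (N t)) w‖ ≤ Λ₂)
    (hflow_init : ∀ s x, Φ s s x = x)
    (hflow_ode : ∀ s x, ∀ t ∈ Icc t₀ T, HasDerivAt (fun τ' => Φ s τ' x) (N t (Φ s t x)) t)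
    (hgroup : ∀ t₁ t₂ t₃ : ℝ, ∀ x, Φ t₂ t₃ (Φ t₁ t₂ x) = Φ t₁ t₃ x)
    (hΦC2 : ∀ s t : ℝ, ContDiff ℝ 2 (Φ s t))
    (hDΦ_fderiv : ∀ s t x, DΦ s t x = fderiv ℝ (Φ s t) x)
    (hDΦ_init : ∀ s x, DΦ s s x = ContinuousLinearMap.id ℝ E)
    (hDΦ_ode : ∀ s x, ∀ t ∈ Icc t₀ T,
      HasDerivAt (fun τ' => DΦ s τ' x) ((fderiv ℝ (N t) (Φ s t x)).comp (DΦ s t x)) t)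
    {x : ℝ → E} (hx : ContinuousOn x (Icc t₀ T)) :
    ContinuousOn (fun t => DΦ t T (x t)) (Icc t₀ T) := by
  intro s hs
  have hchain : ∀ t, DΦ s T (x s) = (DΦ t T (Φ s t (x s))).comp (DΦ s t (x s)) := by
    intro t
    have : Φ s T = (Φ t T) ∘ (Φ s t) := by
      funext z; exact (hgroup s t T z).symm
    rw [hDΦ_fderiv, hDΦ_fderiv, hDΦ_fderiv, this]
    exact fderiv_comp _ ((hΦC2 t T).differentiable (by norm_num) _)
      ((hΦC2 s t).differentiable (by norm_num) _)
  set c := Λ₂ * Real.exp (Λ₁ * (T - t₀)) * ((Real.exp (Λ₁ * (T - t₀)) - 1) / Λ₁) with hc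
  have hbound : ∀ t ∈ Icc t₀ T, ‖DΦ t T (x t) - DΦ s T (x s)‖ ≤
      c * ‖x t - Φ s t (x s)‖ + Real.exp (Λ₁ * (T - t₀)) * 
        ‖ContinuousLinearMap.id ℝ E - DΦ s t (x s)‖ := by
    intro t ht
    have hle : Real.exp (Λ₁ * (T - t)) ≤ Real.exp (Λ₁ * (T - t₀)) := by
      apply Real.exp_le_exp.2
      have := ht.1
      gcongr
    have hge : 1 ≤ Real.exp (Λ₁ * (T - t)) := 
      Real.one_le_exp (mul_nonneg hΛ₁.le (sub_nonneg.2 ht.2))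
    have e : DΦ t T (x t) - DΦ s T (x s) = (DΦ t T (x t) - DΦ t T (Φ s t (x s)))
        + (DΦ t T (Φ s t (x s))).comp (ContinuousLinearMap.id ℝ E - DΦ s t (x s)) := by
      rw [hchain t]; ext v; simp
    rw [e]
    refine (norm_add_le _ _).trans (add_le_add ?_ ?_)
    · refine (aux_DΦlip hΛ₁ hΛ₂ hNC2 hDN hD2N hflow_init hflow_ode hDΦ_init hDΦ_ode
        ht.1 ht.2 le_rfl _ _).trans ?_
      rw [hc]
      have : 0 ≤ Real.exp (Λ₁ * (T - t)) - 1 := by linarith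
      gcongr
    · refine (ContinuousLinearMap.opNorm_comp_le _ _).trans ?_
      have := (aux_DΦnorm hDN hDΦ_init hDΦ_ode ht.1 ht.2 le_rfl (Φ s t (x s))).trans hle
      gcongr
  have hlim : Tendsto (fun t => c * ‖x t - Φ s t (x s)‖ + Real.exp (Λ₁ * (T - t₀)) * 
        ‖ContinuousLinearMap.id ℝ E - DΦ s t (x s)‖) (nhdsWithin s (Icc t₀ T)) (nhds 0) := by
    have h1 : ContinuousWithinAt (fun t => c * ‖x t - Φ s t (x s)‖ + Real.exp (Λ₁ * (T - t₀)) * 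
        ‖ContinuousLinearMap.id ℝ E - DΦ s t (x s)‖) (Icc t₀ T) s := by
      have a1 := (hflow_ode s (x s) s hs).continuousAt.continuousWithinAt (s := Icc t₀ T)
      have a2 := (hDΦ_ode s (x s) s hs).continuousAt.continuousWithinAt (s := Icc t₀ T)
      exact (((hx s hs).sub a1).norm.const_mul c).add ((continuousWithinAt_const.sub a2).norm.const_mul _)
    have h2 := h1.tendsto
    simpa [hflow_init, hDΦ_init] using h2
  rw [ContinuousWithinAt, tendsto_iff_norm_sub_tendsto_zero]
  refine squeeze_zero' (Eventually.of_forall fun _ => norm_nonneg _) ?_ hlim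
  filter_upwards [self_mem_nhdsWithin] with t ht using hbound t ht

end flow

theorem aux_intOn {G : Type*} [NormedAddCommGroup G] {t₀ T C : ℝ} {f : ℝ → G}
    (hm : AEStronglyMeasurable f (volume.restrict (Icc t₀ T))) (hC : ∀ s ∈ Icc t₀ T, ‖f s‖ ≤ C) :
    IntegrableOn f (Icc t₀ T) :=
  Integrable.of_bound hm C
    ((ae_restrict_iff' measurableSet_Icc).2 (Eventually.of_forall fun s hs => hC s hs))

theorem aux_carath {E G : Type*} [NormedAddCommGroup E] [NormedSpace ℝ E] [FiniteDimensional ℝ E] 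
    [MeasurableSpace E] [BorelSpace E]
    [NormedAddCommGroup G] [NormedSpace ℝ G] [FiniteDimensional ℝ G] [MeasurableSpace G] [BorelSpace G]
    {t₀ T : ℝ} {f : ℝ → E → G} (hf : ∀ x, Measurable fun t => f t x) (hc : ∀ t, Continuous (f t))
    {x : ℝ → E} (hx : ContinuousOn x (Icc t₀ T)) :
    AEStronglyMeasurable (fun t => f t (x t)) (volume.restrict (Icc t₀ T)) := by
  have : ProperSpace E := FiniteDimensional.proper ℝ E
  have : ProperSpace G := FiniteDimensional.proper ℝ G
  have h1 : StronglyMeasurable (Function.uncurry fun (z : E) (t : ℝ) => f t z) :=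
    stronglyMeasurable_uncurry_of_continuous_of_stronglyMeasurable hc
      (fun z => (hf z).stronglyMeasurable)
  have h2 : AEMeasurable (fun t => (x t, t)) (volume.restrict (Icc t₀ T)) :=
    (hx.aemeasurable measurableSet_Icc).prodMk aemeasurable_id
  exact h1.aestronglyMeasurable.comp_aemeasurable h2

set_option maxHeartbeats 4000000

/-- The Gramian map `𝒩₂` is continuous on `L^∞((t₀,T);ℝ^k)` and globally
Lipschitz on the ball `{‖u‖_∞ ≤ ζ₂}`, with the explicit Lipschitz constant `L_{𝒩₂}` of the
paper (assuming `L_Bζ₂ ∉ {Λ₁, 2Λ₁}`). -/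
theorem stmt13
    (d k : ℕ) (t₀ T Λ₁ Λ₂ L_B Bsup : ℝ) (ht : t₀ < T) (hΛ₁ : 0 < Λ₁) (hΛ₂ : 0 < Λ₂)
    -- the drift N : bounded measurable in time, C² in space, with bounded derivatives
    (N : ℝ → EuclideanSpace ℝ (Fin d) → EuclideanSpace ℝ (Fin d))
    (hNmeas : ∀ x, Measurable fun t => N t x)
    (hNbdd : ∀ x, ∃ M : ℝ, ∀ t ∈ Icc t₀ T, ‖N t x‖ ≤ M)
    (hNC2 : ∀ t, ContDiff ℝ 2 (N t))
    (hDN : ∀ t w, ‖fderiv ℝ (N t) w‖ ≤ Λ₁)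
    (hD2N : ∀ t w, ‖fderiv ℝ (fderiv ℝ (N t)) w‖ ≤ Λ₂)
    -- the nonautonomous flow Φ of N and its spatial derivative DΦ
    (Φ : ℝ → ℝ → EuclideanSpace ℝ (Fin d) → EuclideanSpace ℝ (Fin d))
    (DΦ : ℝ → ℝ → EuclideanSpace ℝ (Fin d) →
      (EuclideanSpace ℝ (Fin d) →L[ℝ] EuclideanSpace ℝ (Fin d)))
    (hflow_init : ∀ s x, Φ s s x = x)
    (hflow_ode : ∀ s x, ∀ t ∈ Icc t₀ T, HasDerivAt (fun τ' => Φ s τ' x) (N t (Φ s t x)) t)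
    (hgroup : ∀ t₁ t₂ t₃ : ℝ, ∀ x, Φ t₂ t₃ (Φ t₁ t₂ x) = Φ t₁ t₃ x)
    (hΦC2 : ∀ s t : ℝ, ContDiff ℝ 2 (Φ s t))
    (hDΦ_fderiv : ∀ s t x, DΦ s t x = fderiv ℝ (Φ s t) x)
    (hDΦ_init : ∀ s x, DΦ s s x = ContinuousLinearMap.id ℝ (EuclideanSpace ℝ (Fin d)))
    (hDΦ_ode : ∀ s x, ∀ t ∈ Icc t₀ T,
      HasDerivAt (fun τ' => DΦ s τ' x) ((fderiv ℝ (N t) (Φ s t x)).comp (DΦ s t x)) t)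
    -- the input matrix B : bounded measurable, C¹ in x with bounded derivative
    (Bm : ℝ → EuclideanSpace ℝ (Fin d) →
      (EuclideanSpace ℝ (Fin k) →L[ℝ] EuclideanSpace ℝ (Fin d)))
    (hBmeas : ∀ x, Measurable fun t => Bm t x)
    (hBsup : ∀ t ∈ Icc t₀ T, ∀ x, ‖Bm t x‖ ≤ Bsup)
    (hBC1 : ∀ t, ContDiff ℝ 1 (Bm t))
    (hDB : ∀ t w, ‖fderiv ℝ (Bm t) w‖ ≤ L_B)
    -- the solution map u ↦ x_u of (Σ) with initial state x⁰
    (x0 : EuclideanSpace ℝ (Fin d))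
    (xSol : (ℝ → EuclideanSpace ℝ (Fin k)) → ℝ → EuclideanSpace ℝ (Fin d))
    (hxSol : ∀ u, Adm t₀ T u →
      ContinuousOn (xSol u) (Icc t₀ T) ∧ xSol u t₀ = x0 ∧
      ∀ t ∈ Icc t₀ T, xSol u t = x0 + ∫ s in t₀..t, (N s (xSol u s) + Bm s (xSol u s) (u s)))
    -- second derivative of the flow (second variational equation)
    (D2Φ : ℝ → ℝ → EuclideanSpace ℝ (Fin d) →
      (EuclideanSpace ℝ (Fin d) →L[ℝ]
        (EuclideanSpace ℝ (Fin d) →L[ℝ] EuclideanSpace ℝ (Fin d))))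
    (hD2Φ_init : ∀ s x, D2Φ s s x = 0)
    (hD2Φ_ode : ∀ s x, ∀ t ∈ Icc t₀ T, ∀ v w : EuclideanSpace ℝ (Fin d),
      HasDerivAt (fun τ' => D2Φ s τ' x v w)
        (fderiv ℝ (N t) (Φ s t x) (D2Φ s t x v w)
          + fderiv ℝ (fderiv ℝ (N t)) (Φ s t x) (DΦ s t x v) (DΦ s t x w)) t)
    -- the radius ζ₂ of the ball, with the nondegeneracy side conditions
    (zeta2 : ℝ) (hzeta2 : 0 < zeta2)
    (hne1 : L_B * zeta2 ≠ Λ₁) (hne2 : L_B * zeta2 ≠ 2 * Λ₁) :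
    -- 𝒩₂ is continuous on L^∞
    (∀ u, Adm t₀ T u → ∀ ε > (0:ℝ), ∃ δ > (0:ℝ), ∀ v, Adm t₀ T v →
      supIcc t₀ T (fun t => ‖u t - v t‖) < δ →
      ‖gram t₀ T T DΦ Bm (xSol u) - gram t₀ T T DΦ Bm (xSol v)‖ < ε) ∧
    -- 𝒩₂ is Lipschitz on the ball {‖u‖_∞ ≤ ζ₂}, with the explicit constant L_{𝒩₂}
    (∀ u v : ℝ → EuclideanSpace ℝ (Fin k), Adm t₀ T u → Adm t₀ T v →
      (∀ t ∈ Icc t₀ T, ‖u t‖ ≤ zeta2) → (∀ t ∈ Icc t₀ T, ‖v t‖ ≤ zeta2) →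
      ‖gram t₀ T T DΦ Bm (xSol u) - gram t₀ T T DΦ Bm (xSol v)‖
        ≤ (L_B * Bsup ^ 2 * Real.exp (Λ₁ * (T - t₀)) / Λ₁
            * ((Real.exp (Λ₁ * (T - t₀)) - Real.exp (L_B * zeta2 * (T - t₀)))
                  / (Λ₁ - L_B * zeta2)
               - (Real.exp (L_B * zeta2 * (T - t₀)) - Real.exp (-(Λ₁ * (T - t₀))))
                  / (L_B * zeta2 + Λ₁))
          + 2 * Bsup ^ 3 * Λ₂ * Real.exp (Λ₁ * (T - t₀)) / (Λ₁ * (Λ₁ + L_B * zeta2))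
            * ((Real.exp (2 * Λ₁ * (T - t₀)) - Real.exp (L_B * zeta2 * (T - t₀)))
                  / (2 * Λ₁ - L_B * zeta2)
               + (Real.exp (Λ₁ * (T - t₀)) - Real.exp (L_B * zeta2 * (T - t₀)))
                  / (Λ₁ - L_B * zeta2)
               + (Real.exp (Λ₁ * (T - t₀)) - Real.exp (-(Λ₁ * (T - t₀)))) / (2 * Λ₁)
               - (Real.exp (2 * Λ₁ * (T - t₀)) - Real.exp (-(Λ₁ * (T - t₀)))) / (3 * Λ₁)))
          * supIcc t₀ T (fun t => ‖u t - v t‖)) := by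
  have hL : 0 ≤ L_B := (norm_nonneg (fderiv ℝ (Bm t₀) 0)).trans (hDB t₀ 0)
  have hβ : 0 ≤ Bsup := (norm_nonneg _).trans (hBsup t₀ ⟨le_rfl, ht.le⟩ 0)
  have hBlip : ∀ t x y, ‖Bm t x - Bm t y‖ ≤ L_B * ‖x - y‖ := fun t x y =>
    aux_lip ((hBC1 t).differentiable (by norm_num)) (hDB t) x y
  have hNlip : ∀ t x y, ‖N t x - N t y‖ ≤ Λ₁ * ‖x - y‖ := fun t x y =>
    aux_lip ((hNC2 t).differentiable (by norm_num)) (hDN t) x y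
  -- facts on the sup norm
  have hsup : ∀ u v : ℝ → EuclideanSpace ℝ (Fin k), Adm t₀ T u → Adm t₀ T v → ∀ t ∈ Icc t₀ T,
      ‖u t - v t‖ ≤ supIcc t₀ T (fun t => ‖u t - v t‖) := by
    rintro u v ⟨_, M, hM⟩ ⟨_, M', hMv⟩ t h
    refine le_csSup ⟨M + M', ?_⟩ ⟨t, h, rfl⟩
    rintro _ ⟨s, hs, rfl⟩
    exact (norm_sub_le _ _).trans (add_le_add (hM s hs) (hMv s hs))
  -- integrability of the right-hand side
  have hItg : ∀ u, Adm t₀ T u → IntegrableOn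
      (fun s => N s (xSol u s) + Bm s (xSol u s) (u s)) (Icc t₀ T) := by
    intro u hu
    obtain ⟨hxc, -, -⟩ := hxSol u hu
    obtain ⟨hum, M, hM⟩ := hu
    obtain ⟨M0, hM0⟩ := hNbdd 0
    obtain ⟨R, hR⟩ := isCompact_Icc.exists_bound_of_continuousOn hxc
    have m1 := aux_carath hNmeas (fun t => (hNC2 t).continuous) hxc
    have m2 := aux_carath hBmeas (fun t => (hBC1 t).continuous) hxc
    have m3 : AEStronglyMeasurable (fun s => Bm s (xSol u s) (u s)) (volume.restrict (Icc t₀ T)) :=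
      isBoundedBilinearMap_apply.continuous.comp_aestronglyMeasurable
        (m2.prodMk hum.aestronglyMeasurable)
    refine aux_intOn (C := (M0 + Λ₁ * R) + Bsup * M) (m1.add m3) fun s hs => ?_
    refine (norm_add_le _ _).trans (add_le_add ?_ ?_)
    · have h1 := hNlip s (xSol u s) 0
      have h2 := hM0 s hs
      have h3 := norm_sub_norm_le (N s (xSol u s)) (N s 0)
      have h4 := mul_le_mul_of_nonneg_left (hR s hs) hΛ₁.le
      rw [sub_zero] at h1
      linarith
    · refine (ContinuousLinearMap.le_opNorm _ _).trans ?_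
      exact mul_le_mul (hBsup s hs _) (hM s hs) (norm_nonneg _) hβ
  -- integrability of the Gramian integrand
  have hKint : ∀ u, Adm t₀ T u → IntervalIntegrable (fun t => (Kker T DΦ Bm (xSol u) t).comp
      (ContinuousLinearMap.adjoint (Kker T DΦ Bm (xSol u) t))) volume t₀ T := by
    intro u hu
    obtain ⟨hxc, -, -⟩ := hxSol u hu
    have m1 := aux_cont hΛ₁ hΛ₂ hNC2 hDN hD2N hflow_init hflow_ode hgroup hΦC2 hDΦ_fderiv
      hDΦ_init hDΦ_ode hxc
    have m2 := aux_carath hBmeas (fun t => (hBC1 t).continuous) hxc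
    have m3 : AEStronglyMeasurable (fun t => Kker T DΦ Bm (xSol u) t) (volume.restrict (Icc t₀ T)) :=
      isBoundedBilinearMap_comp.continuous.comp_aestronglyMeasurable
        ((m1.aestronglyMeasurable measurableSet_Icc).prodMk m2)
    have m4 : AEStronglyMeasurable (fun t => ContinuousLinearMap.adjoint (Kker T DΦ Bm (xSol u) t))
        (volume.restrict (Icc t₀ T)) :=
      (LinearIsometryEquiv.continuous _).comp_aestronglyMeasurable m3
    have m5 : AEStronglyMeasurable (fun t => (Kker T DΦ Bm (xSol u) t).comp
      (ContinuousLinearMap.adjoint (Kker T DΦ Bm (xSol u) t))) (volume.restrict (Icc t₀ T)) :=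
      isBoundedBilinearMap_comp.continuous.comp_aestronglyMeasurable (m3.prodMk m4)
    obtain ⟨R, hR⟩ := isCompact_Icc.exists_bound_of_continuousOn m1
    rw [intervalIntegrable_iff_integrableOn_Icc_of_le ht.le]
    refine aux_intOn (C := (R * Bsup) * (R * Bsup)) m5 fun s hs => ?_
    have hR0 : 0 ≤ R := (norm_nonneg _).trans (hR s hs)
    have hK : ‖Kker T DΦ Bm (xSol u) s‖ ≤ R * Bsup :=
      (ContinuousLinearMap.opNorm_comp_le _ _).trans
        (mul_le_mul (hR s hs) (hBsup s hs _) (norm_nonneg _) hR0)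
    refine (ContinuousLinearMap.opNorm_comp_le _ _).trans ?_
    rw [LinearIsometryEquiv.norm_map]
    exact mul_le_mul hK hK (norm_nonneg _) (by positivity)
  -- dependence of the trajectory on the control
  have htraj : ∀ ζ : ℝ, 0 ≤ ζ → ∀ u v, Adm t₀ T u → Adm t₀ T v → (∀ t ∈ Icc t₀ T, ‖u t‖ ≤ ζ) →
      ∀ t ∈ Icc t₀ T, ‖xSol u t - xSol v t‖ ≤
        (Bsup * supIcc t₀ T (fun t => ‖u t - v t‖)) *
          ((Real.exp ((Λ₁ + L_B * ζ) * (t - t₀)) - 1) / (Λ₁ + L_B * ζ)) := by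
    intro ζ hζ u v hu hv huζ
    set δ := supIcc t₀ T (fun t => ‖u t - v t‖) with hδ
    have hδ0 : 0 ≤ δ := (norm_nonneg _).trans (hsup u v hu hv t₀ ⟨le_rfl, ht.le⟩)
    obtain ⟨hxc, -, hxe⟩ := hxSol u hu
    obtain ⟨hyc, -, hye⟩ := hxSol v hv
    have hzc : ContinuousOn (fun t => ‖xSol u t - xSol v t‖) (Icc t₀ T) := (hxc.sub hyc).norm
    refine aux_intgron ht.le (by positivity) (by positivity) (fun t => norm_nonneg _) hzc ?_
    intro t h
    have hsub : Icc t₀ t ⊆ Icc t₀ T := Icc_subset_Icc_right h.2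
    have i1 : IntervalIntegrable (fun s => N s (xSol u s) + Bm s (xSol u s) (u s)) volume t₀ t := by
      rw [intervalIntegrable_iff_integrableOn_Icc_of_le h.1]
      exact (hItg u hu).mono_set hsub
    have i2 : IntervalIntegrable (fun s => N s (xSol v s) + Bm s (xSol v s) (v s)) volume t₀ t := by
      rw [intervalIntegrable_iff_integrableOn_Icc_of_le h.1]
      exact (hItg v hv).mono_set hsub
    have i3 : IntervalIntegrable (fun s => (Λ₁ + L_B * ζ) * ‖xSol u s - xSol v s‖ + Bsup * δ)
        volume t₀ t := by
      apply ContinuousOn.intervalIntegrable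
      rw [uIcc_of_le h.1]
      exact ((hzc.mono hsub).const_mul _).add continuousOn_const
    rw [hxe t h, hye t h, add_sub_add_left_eq_sub, ← intervalIntegral.integral_sub i1 i2]
    refine intervalIntegral.norm_integral_le_of_norm_le h.1 (Eventually.of_forall fun s hs => ?_) i3
    have hs' : s ∈ Icc t₀ T := ⟨hs.1.le, hs.2.trans h.2⟩
    have e : N s (xSol u s) + Bm s (xSol u s) (u s) - (N s (xSol v s) + Bm s (xSol v s) (v s))
      = (N s (xSol u s) - N s (xSol v s)) + (Bm s (xSol u s) - Bm s (xSol v s)) (u s)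
        + Bm s (xSol v s) (u s - v s) := by
      simp only [ContinuousLinearMap.sub_apply, map_sub]; abel
    rw [e]
    have b1 := hNlip s (xSol u s) (xSol v s)
    have b2 : ‖(Bm s (xSol u s) - Bm s (xSol v s)) (u s)‖ ≤ L_B * ‖xSol u s - xSol v s‖ * ζ :=
      (ContinuousLinearMap.le_opNorm _ _).trans
        (mul_le_mul (hBlip s _ _) (huζ s hs') (norm_nonneg _) (by positivity))
    have b3 : ‖Bm s (xSol v s) (u s - v s)‖ ≤ Bsup * δ :=
      (ContinuousLinearMap.le_opNorm _ _).trans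
        (mul_le_mul (hBsup s hs' _) (hsup u v hu hv s hs') (norm_nonneg _) hβ)
    have b4 := norm_add₃_le (a := N s (xSol u s) - N s (xSol v s))
      (b := (Bm s (xSol u s) - Bm s (xSol v s)) (u s)) (c := Bm s (xSol v s) (u s - v s))
    linarith
  -- the Lipschitz estimate with the constant in integral form
  have key : ∀ ζ : ℝ, 0 ≤ ζ → ∀ u v, Adm t₀ T u → Adm t₀ T v → (∀ t ∈ Icc t₀ T, ‖u t‖ ≤ ζ) →
      ‖gram t₀ T T DΦ Bm (xSol u) - gram t₀ T T DΦ Bm (xSol v)‖ ≤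
        auxC t₀ T Λ₁ Λ₂ L_B Bsup (L_B * ζ) * supIcc t₀ T (fun t => ‖u t - v t‖) := by
    intro ζ hζ u v hu hv huζ
    have htr := htraj ζ hζ u v hu hv huζ
    set δ := supIcc t₀ T (fun t => ‖u t - v t‖) with hδ
    unfold gram auxC
    rw [← intervalIntegral.integral_sub (hKint u hu) (hKint v hv),
      ← intervalIntegral.integral_mul_const]
    refine intervalIntegral.norm_integral_le_of_norm_le ht.le
      (Eventually.of_forall fun s hs => ?_) (Continuous.intervalIntegrable (by fun_prop) _ _)
    have hs' : s ∈ Icc t₀ T := ⟨hs.1.le, hs.2⟩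
    have hnK : ∀ x : ℝ → EuclideanSpace ℝ (Fin d),
        ‖Kker T DΦ Bm x s‖ ≤ Real.exp (Λ₁ * (T - s)) * Bsup := fun x =>
      (ContinuousLinearMap.opNorm_comp_le _ _).trans
        (mul_le_mul (aux_DΦnorm hDN hDΦ_init hDΦ_ode hs'.1 hs'.2 le_rfl _) (hBsup s hs' _)
          (norm_nonneg _) (Real.exp_pos _).le)
    have hge : 0 ≤ Real.exp (Λ₁ * (T - s)) - 1 := 
      sub_nonneg.2 (Real.one_le_exp (mul_nonneg hΛ₁.le (sub_nonneg.2 hs'.2)))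
    have hz := htr s hs'
    have hdK : ‖Kker T DΦ Bm (xSol u) s - Kker T DΦ Bm (xSol v) s‖ ≤
        (Real.exp (Λ₁ * (T - s)) * L_B + Λ₂ * Real.exp (Λ₁ * (T - s)) *
          ((Real.exp (Λ₁ * (T - s)) - 1) / Λ₁) * Bsup) * ‖xSol u s - xSol v s‖ := by
      have e : Kker T DΦ Bm (xSol u) s - Kker T DΦ Bm (xSol v) s =
          (DΦ s T (xSol u s)).comp (Bm s (xSol u s) - Bm s (xSol v s))
          + (DΦ s T (xSol u s) - DΦ s T (xSol v s)).comp (Bm s (xSol v s)) := by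
        ext w; simp [Kker]
      rw [e]
      have b1 : ‖(DΦ s T (xSol u s)).comp (Bm s (xSol u s) - Bm s (xSol v s))‖ ≤
          Real.exp (Λ₁ * (T - s)) * (L_B * ‖xSol u s - xSol v s‖) :=
        (ContinuousLinearMap.opNorm_comp_le _ _).trans
          (mul_le_mul (aux_DΦnorm hDN hDΦ_init hDΦ_ode hs'.1 hs'.2 le_rfl _) (hBlip s _ _)
          (norm_nonneg _) (Real.exp_pos _).le)
      have b2 := (ContinuousLinearMap.opNorm_comp_le (DΦ s T (xSol u s) - DΦ s T (xSol v s))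
        (Bm s (xSol v s))).trans
        (mul_le_mul (aux_DΦlip hΛ₁ hΛ₂ hNC2 hDN hD2N hflow_init hflow_ode hDΦ_init hDΦ_ode
          hs'.1 hs'.2 le_rfl (xSol u s) (xSol v s)) (hBsup s hs' _) (norm_nonneg _) (by positivity))
      refine (norm_add_le _ _).trans ((add_le_add b1 b2).trans (le_of_eq (by ring)))
    have hdK' := hdK.trans (mul_le_mul_of_nonneg_left hz (by positivity))
    set Ku := Kker T DΦ Bm (xSol u) s
    set Kv := Kker T DΦ Bm (xSol v) s
    have e : Ku.comp (ContinuousLinearMap.adjoint Ku) - Kv.comp (ContinuousLinearMap.adjoint Kv) =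
        (Ku - Kv).comp (ContinuousLinearMap.adjoint Ku)
          + Kv.comp (ContinuousLinearMap.adjoint (Ku - Kv)) := by
      ext w; simp
    rw [e]
    have c1 : ‖(Ku - Kv).comp (ContinuousLinearMap.adjoint Ku)‖ ≤ 
        ‖Ku - Kv‖ * (Real.exp (Λ₁ * (T - s)) * Bsup) := by
      refine (ContinuousLinearMap.opNorm_comp_le _ _).trans ?_
      rw [LinearIsometryEquiv.norm_map]
      exact mul_le_mul_of_nonneg_left (hnK _) (norm_nonneg _)
    have c2 : ‖Kv.comp (ContinuousLinearMap.adjoint (Ku - Kv))‖ ≤ 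
        (Real.exp (Λ₁ * (T - s)) * Bsup) * ‖Ku - Kv‖ := by
      refine (ContinuousLinearMap.opNorm_comp_le _ _).trans ?_
      rw [LinearIsometryEquiv.norm_map]
      exact mul_le_mul_of_nonneg_right (hnK _) (norm_nonneg _)
    have c3 := mul_le_mul_of_nonneg_left hdK'
      (show 0 ≤ 2 * (Real.exp (Λ₁ * (T - s)) * Bsup) by positivity)
    refine (norm_add_le _ _).trans ((add_le_add c1 c2).trans ?_)
    calc _ = 2 * (Real.exp (Λ₁ * (T - s)) * Bsup) * ‖Ku - Kv‖ := by ring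
      _ ≤ _ := c3
      _ = _ := by ring
  refine ⟨?_, ?_⟩
  · intro u hu ε hε
    obtain ⟨M, hM⟩ := hu.2
    have hM0 : 0 ≤ M := (norm_nonneg _).trans (hM t₀ ⟨le_rfl, ht.le⟩)
    set C := auxC t₀ T Λ₁ Λ₂ L_B Bsup (L_B * M)
    refine ⟨ε / (|C| + 1), by positivity, fun v hv hlt => ?_⟩
    have h0 : 0 ≤ supIcc t₀ T (fun t => ‖u t - v t‖) :=
      (norm_nonneg _).trans (hsup u v hu hv t₀ ⟨le_rfl, ht.le⟩)
    have h1 := key M hM0 u v hu hv hM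
    rw [lt_div_iff₀ (by positivity)] at hlt
    have := le_abs_self C
    nlinarith
  · intro u v hu hv hu2 _
    refine (key zeta2 hzeta2.le u v hu hv hu2).trans ?_
    exact mul_le_mul_of_nonneg_right
      (auxC_le ht hΛ₁ hΛ₂ hβ (mul_nonneg hL hzeta2.le) hne1 hne2)
      ((norm_nonneg _).trans (hsup u v hu hv t₀ ⟨le_rfl, ht.le⟩))
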